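/- Let E_k(t) = Σ_τ η(s_k,a_k) · P_k(t)(τ) be the stage-k expectation over trajectories of length k. Then for every t ∈ ℝ the derivative of E_k at t exists and equals Σ_τ η(s_k,a_k) · P_k(t)(τ) · ( (d/dt) log(π t s_k a_k) + Σ_{i=0}^{k-1} (d/dt) log( f t s_i a_i s_{i+1} · π t s_i a_i ) ), the sum ranging over all trajectories τ of length k. (Lemma 1: sensitivity of a Markov chain.) -/

import Mathlib

/-!
A nonvanishing differentiable function satisfies `g' = g * (log g)'`, and the logarithmic derivative
turns the product defining the weight of a trajectory into a sum of per-step scores. The stage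
expectation is a finite sum of such weights, so it is differentiated term by term. The initial
weight does not depend on the parameter; since it may vanish, it is kept outside the logarithmic
derivative as a constant factor.
-/

section Trajectory

variable {S A : Type*} {k : ℕ}

/-- The weight `P_k(τ)` of a trajectory `((s_0, …, s_k), (a_0, …, a_k))` under the initial
weight `ρ0`, the policy `π` and the transition kernel `f`, all at a fixed parameter. No
normalization is imposed, so the weights need not be probabilities. -/
def trajectoryWeight {R : Type*} [CommMonoid R]
    (ρ0 : S → R) (π : S → A → R) (f : S → A → S → R)
    (τ : (Fin (k + 1) → S) × (Fin (k + 1) → A)) : R :=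
  ρ0 (τ.1 0) * π (τ.1 (Fin.last k)) (τ.2 (Fin.last k)) *
    ∏ i : Fin k,
      (f (τ.1 i.castSucc) (τ.2 i.castSucc) (τ.1 i.succ) *
        π (τ.1 i.castSucc) (τ.2 i.castSucc))

section LogDeriv

variable {𝕜 F : Type*} [NontriviallyNormedField 𝕜] [NontriviallyNormedField F] [NormedAlgebra 𝕜 F]

/-- The score of a trajectory at parameter `t`: the sum of the logarithmic derivatives of the
parameter-dependent factors of its weight, one for each step and one for the last action. It uses
`logDeriv` rather than the derivative of a logarithm, so that it makes sense over any normed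
field. -/
noncomputable def trajectoryScore (π : 𝕜 → S → A → F) (f : 𝕜 → S → A → S → F) (t : 𝕜)
    (τ : (Fin (k + 1) → S) × (Fin (k + 1) → A)) : F :=
  logDeriv (fun u => π u (τ.1 (Fin.last k)) (τ.2 (Fin.last k))) t +
    ∑ i : Fin k,
      logDeriv (fun u => f u (τ.1 i.castSucc) (τ.2 i.castSucc) (τ.1 i.succ) *
        π u (τ.1 i.castSucc) (τ.2 i.castSucc)) t

theorem hasDerivAt_mul_logDeriv {g : 𝕜 → F} {t : 𝕜} (hg : DifferentiableAt 𝕜 g t) (hg0 : g t ≠ 0) :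
    HasDerivAt g (g t * logDeriv g t) t := by
  simpa only [logDeriv_apply, mul_div_cancel₀ _ hg0] using hg.hasDerivAt

theorem hasDerivAt_prod_mul_sum_logDeriv {ι : Type*} {s : Finset ι} {g : ι → 𝕜 → F} {t : 𝕜}
    (hg : ∀ i ∈ s, DifferentiableAt 𝕜 (g i) t) (hg0 : ∀ i ∈ s, g i t ≠ 0) :
    HasDerivAt (fun u => ∏ i ∈ s, g i u)
      ((∏ i ∈ s, g i t) * ∑ i ∈ s, logDeriv (g i) t) t := by
  rw [← logDeriv_prod hg0 hg]
  exact hasDerivAt_mul_logDeriv (.fun_finsetProd hg) (Finset.prod_ne_zero_iff.mpr hg0)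

theorem hasDerivAt_trajectoryWeight (ρ0 : S → F)
    {π : 𝕜 → S → A → F} {f : 𝕜 → S → A → S → F} {t : 𝕜}
    {τ : (Fin (k + 1) → S) × (Fin (k + 1) → A)}
    (hπ0 : ∀ j, π t (τ.1 j) (τ.2 j) ≠ 0)
    (hπ : ∀ j, DifferentiableAt 𝕜 (fun u => π u (τ.1 j) (τ.2 j)) t)
    (hf0 : ∀ i : Fin k, f t (τ.1 i.castSucc) (τ.2 i.castSucc) (τ.1 i.succ) ≠ 0)
    (hf : ∀ i : Fin k,
      DifferentiableAt 𝕜 (fun u => f u (τ.1 i.castSucc) (τ.2 i.castSucc) (τ.1 i.succ)) t) :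
    HasDerivAt (fun u => trajectoryWeight ρ0 (π u) (f u) τ)
      (trajectoryWeight ρ0 (π t) (f t) τ * trajectoryScore π f t τ) t := by
  have last_action := hasDerivAt_mul_logDeriv (hπ (Fin.last k)) (hπ0 (Fin.last k))
  have transitions := hasDerivAt_prod_mul_sum_logDeriv (s := Finset.univ)
    (fun i _ => (hf i).fun_mul (hπ i.castSucc)) (fun i _ => mul_ne_zero (hf0 i) (hπ0 i.castSucc))
  refine ((last_action.const_mul (ρ0 (τ.1 0))).fun_mul transitions).congr_deriv ?_
  simp only [trajectoryWeight, trajectoryScore]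
  ring

theorem markov_chain_sensitivity_general [Fintype S] [Fintype A]
    (k : ℕ) (ρ0 : S → F) (η : S → A → F) {π : 𝕜 → S → A → F} {f : 𝕜 → S → A → S → F} {t : 𝕜}
    (hπ0 : ∀ s a, π t s a ≠ 0) (hπ : ∀ s a, DifferentiableAt 𝕜 (fun u => π u s a) t)
    (hf0 : ∀ s a s', f t s a s' ≠ 0)
    (hf : ∀ s a s', DifferentiableAt 𝕜 (fun u => f u s a s') t) :
    HasDerivAt
      (fun u => ∑ τ : (Fin (k + 1) → S) × (Fin (k + 1) → A),
        η (τ.1 (Fin.last k)) (τ.2 (Fin.last k)) * trajectoryWeight ρ0 (π u) (f u) τ)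
      (∑ τ : (Fin (k + 1) → S) × (Fin (k + 1) → A),
        η (τ.1 (Fin.last k)) (τ.2 (Fin.last k)) * trajectoryWeight ρ0 (π t) (f t) τ *
          trajectoryScore π f t τ) t := by
  simp only [mul_assoc (η _ _)]
  exact .fun_sum fun τ _ => (hasDerivAt_trajectoryWeight ρ0 (fun _ => hπ0 _ _) (fun _ => hπ _ _)
    (fun _ => hf0 _ _ _) (fun _ => hf _ _ _)).const_mul _

end LogDeriv

theorem trajectoryScore_eq_deriv_log {π : ℝ → S → A → ℝ} {f : ℝ → S → A → S → ℝ} {t : ℝ}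
    {τ : (Fin (k + 1) → S) × (Fin (k + 1) → A)}
    (hπ0 : ∀ j, π t (τ.1 j) (τ.2 j) ≠ 0)
    (hπ : ∀ j, DifferentiableAt ℝ (fun u => π u (τ.1 j) (τ.2 j)) t)
    (hf0 : ∀ i : Fin k, f t (τ.1 i.castSucc) (τ.2 i.castSucc) (τ.1 i.succ) ≠ 0)
    (hf : ∀ i : Fin k,
      DifferentiableAt ℝ (fun u => f u (τ.1 i.castSucc) (τ.2 i.castSucc) (τ.1 i.succ)) t) :
    trajectoryScore π f t τ =
      deriv (fun u => Real.log (π u (τ.1 (Fin.last k)) (τ.2 (Fin.last k)))) t +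
        ∑ i : Fin k,
          deriv (fun u =>
            Real.log (f u (τ.1 i.castSucc) (τ.2 i.castSucc) (τ.1 i.succ) *
              π u (τ.1 i.castSucc) (τ.2 i.castSucc))) t := by
  have last_action := Real.deriv_log_comp_eq_logDeriv (hπ (Fin.last k)) (hπ0 (Fin.last k))
  have transition (i : Fin k) := Real.deriv_log_comp_eq_logDeriv
    ((hf i).fun_mul (hπ i.castSucc)) (mul_ne_zero (hf0 i) (hπ0 i.castSucc))
  simp only [trajectoryScore, ← last_action, ← transition, Function.comp_def]

end Trajectory

/-- Lemma 1 (sensitivity of a Markov chain): the stage-`k` expectation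
`E_k(t) = Σ_τ η(s_k,a_k) · P_k(t)(τ)` is differentiable in `t`, with derivative
`Σ_τ η(s_k,a_k) · P_k(t)(τ) · (d/dt log π(a_k|s_k) + Σ_{i<k} d/dt log(f(s_{i+1}|s_i,a_i) π(a_i|s_i)))`. -/
theorem markov_chain_sensitivity
    {S A : Type*} [Fintype S] [Fintype A] [Nonempty S] [Nonempty A]
    (k : ℕ) (ρ0 : S → ℝ) (η : S → A → ℝ)
    (π : ℝ → S → A → ℝ) (f : ℝ → S → A → S → ℝ)
    (hπpos : ∀ t s a, 0 < π t s a)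
    (hπdiff : ∀ s a, Differentiable ℝ (fun t => π t s a))
    (hfpos : ∀ t s a s', 0 < f t s a s')
    (hfdiff : ∀ s a s', Differentiable ℝ (fun t => f t s a s'))
    (P : ℝ → ((Fin (k + 1) → S) × (Fin (k + 1) → A)) → ℝ)
    (hP : ∀ t τ, P t τ =
      ρ0 (τ.1 0) * π t (τ.1 (Fin.last k)) (τ.2 (Fin.last k)) *
        ∏ i : Fin k,
          (f t (τ.1 i.castSucc) (τ.2 i.castSucc) (τ.1 i.succ) *
            π t (τ.1 i.castSucc) (τ.2 i.castSucc)))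
    (t : ℝ) :
    HasDerivAt
      (fun t => ∑ τ : (Fin (k + 1) → S) × (Fin (k + 1) → A),
        η (τ.1 (Fin.last k)) (τ.2 (Fin.last k)) * P t τ)
      (∑ τ : (Fin (k + 1) → S) × (Fin (k + 1) → A),
        η (τ.1 (Fin.last k)) (τ.2 (Fin.last k)) * P t τ *
          (deriv (fun t => Real.log (π t (τ.1 (Fin.last k)) (τ.2 (Fin.last k)))) t +
            ∑ i : Fin k,
              deriv (fun t =>
                Real.log (f t (τ.1 i.castSucc) (τ.2 i.castSucc) (τ.1 i.succ) *
                  π t (τ.1 i.castSucc) (τ.2 i.castSucc))) t)) t := by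
  obtain rfl : P = fun t => trajectoryWeight ρ0 (π t) (f t) := funext₂ hP
  simpa only [trajectoryScore_eq_deriv_log (fun _ => (hπpos t _ _).ne') (fun _ => hπdiff _ _ t)
      (fun _ => (hfpos t _ _ _).ne') (fun _ => hfdiff _ _ _ t)] using
    markov_chain_sensitivity_general k ρ0 η (fun s a => (hπpos t s a).ne') (fun s a => hπdiff s a t)
      (fun s a s' => (hfpos t s a s').ne') (fun s a s' => hfdiff s a s' t)
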